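/- Let p be a prime, let F be a field containing a primitive p-th root of unity, and let n ≥ 3. Then F^{(n+1)} = F^{(n)}((J̄_n)^{1/p}); that is, F^{(n+1)} is obtained from F^{(n)} by adjoining the p-th roots of all elements θ ∈ (F^{(n)})^× whose p-class [θ] lies in J̄_n. -/

import Mathlib

open IntermediateField

noncomputable section

namespace BKPaper

variable (p : ℕ) (F Fsep : Type) [Field F] [Field Fsep] [Algebra F Fsep]

/-- One step of the filtration tower: the compositum of `E` with all cyclic (i.e. Galois of
degree `p`) extensions of `E` inside `Fsep` that are Galois over `F`. -/
def step (E : IntermediateField F Fsep) : IntermediateField F Fsep :=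
  ⨆ K : Option {K : IntermediateField (↥E) Fsep //
      IsGalois (↥E) ↥K ∧ Module.finrank (↥E) ↥K = p ∧
        IsGalois F ↥(IntermediateField.restrictScalars F K)},
    K.elim E fun K => IntermediateField.restrictScalars F (K : IntermediateField (↥E) Fsep)

/-- The filtration tower `F = F⁽¹⁾ ⊆ F⁽²⁾ ⊆ ⋯` of the paper:  `F⁽²⁾` is the compositum of all
cyclic degree-`p` extensions of `F`, and for `n ≥ 2`, `F⁽ⁿ⁺¹⁾` is the compositum of all cyclic
degree-`p` extensions of `F⁽ⁿ⁾` that are Galois over `F`. -/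
def filtration : ℕ → IntermediateField F Fsep
  | 0 => ⊥
  | 1 => ⊥
  | (n + 2) => step p F Fsep (filtration (n + 1))

theorem normal_step (E : IntermediateField F Fsep) [hE : Normal F ↥E] :
    Normal F ↥(step p F Fsep E) := by
  have h : ∀ K : Option {K : IntermediateField (↥E) Fsep //
      IsGalois (↥E) ↥K ∧ Module.finrank (↥E) ↥K = p ∧
        IsGalois F ↥(IntermediateField.restrictScalars F K)},
      Normal F ↥(K.elim E fun K =>
        IntermediateField.restrictScalars F (K : IntermediateField (↥E) Fsep)) := by
    rintro (_ | K)
    · exact hE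
    · exact K.2.2.2.to_normal
  exact IntermediateField.normal_iSup (h := h)

instance normal_filtration : ∀ n : ℕ, Normal F ↥(filtration p F Fsep n)
  | 0 => inferInstanceAs (Normal F ↥(⊥ : IntermediateField F Fsep))
  | 1 => inferInstanceAs (Normal F ↥(⊥ : IntermediateField F Fsep))
  | (n + 2) => by
      have := normal_filtration (n + 1)
      exact normal_step p F Fsep (filtration p F Fsep (n + 1))

theorem le_step (E : IntermediateField F Fsep) : E ≤ step p F Fsep E :=
  le_iSup_of_le (Option.none) (le_refl E)

variable {F Fsep}

/-- The restriction map `Gal(L/F) → Gal(E/F)` for nested Galois extensions `E ≤ L`. -/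
def galRes {E L : IntermediateField F Fsep} (h : E ≤ L) [Normal F ↥E] :
    (↥L ≃ₐ[F] ↥L) →* (↥E ≃ₐ[F] ↥E) :=
  letI : Algebra ↥E ↥L := (IntermediateField.inclusion h).toRingHom.toAlgebra
  letI : IsScalarTower F ↥E ↥L := IsScalarTower.of_algebraMap_eq fun _ => rfl
  AlgEquiv.restrictNormalHom ↥E

/-- The restriction map `Gal(Fsep/F) → Gal(E/F)`. -/
def galResTop (E : IntermediateField F Fsep) [Normal F ↥E] :
    (Fsep ≃ₐ[F] Fsep) →* (↥E ≃ₐ[F] ↥E) :=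
  AlgEquiv.restrictNormalHom ↥E

end BKPaper

namespace BKPaper

theorem filtration_le_succ (p : ℕ) (F Fsep : Type) [Field F] [Field Fsep] [Algebra F Fsep] :
    ∀ n : ℕ, filtration p F Fsep n ≤ filtration p F Fsep (n + 1)
  | 0 => bot_le
  | 1 => bot_le
  | (n + 2) => le_step p F Fsep (filtration p F Fsep (n + 2))

end BKPaper

open BKPaper

namespace BKPaper

/-- Kummer theory in degree `p`: two `p`-th roots in a cyclic extension of degree `p` differ by
a power of the first and an element of the base field. -/
theorem exists_eq_pow_mul_of_pow_mem {p : ℕ} [hp : Fact p.Prime] {E L : Type*} [Field E] [Field L]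
    [Algebra E L] [IsGalois E L] (hd : Module.finrank E L = p)
    {x y : L} (hx : x ∉ Set.range (algebraMap E L)) (hxp : x ^ p ∈ Set.range (algebraMap E L))
    (hyp : y ^ p ∈ Set.range (algebraMap E L)) :
    ∃ (i : ℕ) (u : E), y = x ^ i * algebraMap E L u := by
  have hfin : FiniteDimensional E L := Module.finite_of_finrank_pos (hd ▸ hp.out.pos)
  have hx0 : x ≠ 0 := fun h => hx ⟨0, by rw [h, map_zero]⟩
  by_cases hy0 : y = 0
  · exact ⟨0, 0, by simp [hy0]⟩
  obtain ⟨τ, hτ⟩ : ∃ τ : L ≃ₐ[E] L, τ x ≠ x := by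
    by_contra! h
    exact hx ((IsGalois.mem_range_algebraMap_iff_fixed x).2 h)
  have hratio : ∀ z : L, z ≠ 0 → z ^ p ∈ Set.range (algebraMap E L) → (τ z / z) ^ p = 1 := by
    rintro z hz ⟨a, ha⟩
    rw [div_pow, ← map_pow, ← ha, AlgEquiv.commutes, ha, div_self (pow_ne_zero _ hz)]
  have hω : IsPrimitiveRoot (τ x / x) p := by
    refine IsPrimitiveRoot.iff_orderOf.2 (orderOf_eq_prime (hratio x hx0 hxp) ?_)
    rwa [Ne, div_eq_one_iff_eq hx0]
  have : NeZero p := ⟨hp.out.ne_zero⟩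
  obtain ⟨i, -, hi⟩ := hω.eq_pow_of_pow_eq_one (hratio y hy0 hyp)
  have hcard : Nat.card (L ≃ₐ[E] L) = p := (IsGalois.card_aut_eq_finrank E L).trans hd
  have hτ1 : τ ≠ 1 := fun h => hτ (by rw [h, AlgEquiv.one_apply])
  have hfix : τ (y / x ^ i) = y / x ^ i := by
    rw [div_pow, div_eq_div_iff (pow_ne_zero _ hx0) hy0] at hi
    rw [map_div₀, map_pow, div_eq_div_iff (pow_ne_zero _ (by simpa using hx0))
      (pow_ne_zero _ hx0), ← hi, mul_comm]
  obtain ⟨u, hu⟩ : y / x ^ i ∈ Set.range (algebraMap E L) := by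
    refine (IsGalois.mem_range_algebraMap_iff_fixed _).2 fun ρ => ?_
    have hρ : ρ ∈ Subgroup.zpowers τ := mem_zpowers_of_prime_card hcard hτ1
    have hle : Subgroup.zpowers τ ≤ MulAction.stabilizer (L ≃ₐ[E] L) (y / x ^ i) := by
      rw [Subgroup.zpowers_le]
      exact hfix
    exact hle hρ
  exact ⟨i, u, by rw [hu, mul_div_cancel₀ _ (pow_ne_zero _ hx0)]⟩

section

variable {p : ℕ} {F Fsep : Type} [Field F] [Field Fsep] [Algebra F Fsep]

/-- The elements of `Fsep` that are fixed by some `p`-power iterate of `σ`. -/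
def primePowFixedField (p : ℕ) (σ : Fsep ≃ₐ[F] Fsep) : IntermediateField F Fsep where
  carrier := {x | ∃ k : ℕ, Function.IsPeriodicPt σ (p ^ k) x}
  mul_mem' := by
    rintro x y ⟨k, hk⟩ ⟨l, hl⟩
    refine ⟨k + l, ?_⟩
    have hx := hk.mul_const (p ^ l)
    have hy := hl.const_mul (p ^ k)
    rw [← pow_add] at hx hy
    rw [Function.IsPeriodicPt, Function.IsFixedPt, iterate_map_mul, hx.eq, hy.eq]
  add_mem' := by
    rintro x y ⟨k, hk⟩ ⟨l, hl⟩
    refine ⟨k + l, ?_⟩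
    have hx := hk.mul_const (p ^ l)
    have hy := hl.const_mul (p ^ k)
    rw [← pow_add] at hx hy
    rw [Function.IsPeriodicPt, Function.IsFixedPt, iterate_map_add, hx.eq, hy.eq]
  algebraMap_mem' a := ⟨0, by simp [Function.IsPeriodicPt, Function.IsFixedPt]⟩
  inv_mem' := by
    rintro x ⟨k, hk⟩
    refine ⟨k, ?_⟩
    rcases eq_or_ne x 0 with rfl | hx
    · rwa [inv_zero]
    refine eq_inv_of_mul_eq_one_left ?_
    nth_rewrite 2 [← hk.eq]
    rw [← iterate_map_mul, inv_mul_cancel₀ hx, iterate_map_one]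

theorem mem_primePowFixedField {σ : Fsep ≃ₐ[F] Fsep} {x : Fsep} :
    x ∈ primePowFixedField p σ ↔ ∃ k : ℕ, σ^[p ^ k] x = x :=
  Iff.rfl

theorem exists_pow_eq_mul_of_pow_eq [hp : Fact p.Prime] {R : Type*} [Field R] {ζ x y : R}
    (hζ : IsPrimitiveRoot ζ p) (h : y ^ p = x ^ p) : ∃ j : ℕ, y = ζ ^ j * x := by
  have : NeZero p := ⟨hp.out.ne_zero⟩
  rcases eq_or_ne x 0 with rfl | hx
  · exact ⟨0, by simpa [hp.out.ne_zero] using h⟩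
  · obtain ⟨j, -, hj⟩ := hζ.eq_pow_of_pow_eq_one (ξ := y / x)
      (by rw [div_pow, h, div_self (pow_ne_zero _ hx)])
    exact ⟨j, by rw [hj, div_mul_cancel₀ _ hx]⟩

theorem mem_primePowFixedField_of_pow_mem [hp : Fact p.Prime] {ζ : F} (hζ : IsPrimitiveRoot ζ p)
    {σ : Fsep ≃ₐ[F] Fsep} {x : Fsep} (hx : x ^ p ∈ primePowFixedField p σ) :
    x ∈ primePowFixedField p σ := by
  obtain ⟨k, hk⟩ := mem_primePowFixedField.1 hx
  rw [iterate_map_pow] at hk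
  obtain ⟨j, hj⟩ := exists_pow_eq_mul_of_pow_eq
    (hζ.map_of_injective (algebraMap F Fsep).injective) hk
  refine mem_primePowFixedField.2 ⟨k + 1, ?_⟩
  set f := σ^[p ^ k] with hf
  have hfζ : f (algebraMap F Fsep ζ) = algebraMap F Fsep ζ :=
    Function.iterate_fixed (σ.commutes ζ) _
  have hit : ∀ m : ℕ, f^[m] x = (algebraMap F Fsep ζ ^ j) ^ m * x := by
    intro m
    induction m with
    | zero => simp
    | succ m ih =>
      rw [Function.iterate_succ_apply', ih, hf, iterate_map_mul, iterate_map_pow, iterate_map_pow,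
        ← hf, hfζ, hj, pow_succ, mul_assoc]
  rw [pow_succ, Function.iterate_mul, ← hf, hit, ← pow_mul, mul_comm j, pow_mul, ← map_pow,
    hζ.pow_eq_one, map_one, one_pow, one_mul]

/-- A cyclic degree-`p` extension is generated by a `p`-th root. -/
theorem exists_eq_adjoin_root [hp : Fact p.Prime] {ζ : F} (hζ : IsPrimitiveRoot ζ p)
    {E : IntermediateField F Fsep} {K : IntermediateField E Fsep} [IsGalois E K]
    (hd : Module.finrank E K = p) :
    ∃ x : Fsep, x ∉ E ∧ x ^ p ∈ E ∧ E⟮x⟯ = K := by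
  have hfin : FiniteDimensional E K := Module.finite_of_finrank_pos (hd ▸ hp.out.pos)
  have hcard : Nat.card (K ≃ₐ[E] K) = p := (IsGalois.card_aut_eq_finrank E K).trans hd
  have hcyc : IsCyclic (K ≃ₐ[E] K) := isCyclic_of_prime_card hcard
  have hroot : (primitiveRoots (Module.finrank E K) E).Nonempty := by
    rw [hd]
    exact ⟨algebraMap F E ζ, (mem_primitiveRoots hp.out.pos).2
      (hζ.map_of_injective (algebraMap F E).injective)⟩
  obtain ⟨α, ⟨a, ha⟩, hα⟩ := exists_root_adjoin_eq_top_of_isCyclic E K hroot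
  rw [hd] at ha
  have hK : E⟮(α : Fsep)⟯ = K := by
    have := congrArg (IntermediateField.lift) hα
    rwa [IntermediateField.lift_adjoin_simple, IntermediateField.lift_top] at this
  refine ⟨α, fun hmem => ?_, ?_, hK⟩
  · have hbot : K = ⊥ := by
      rw [← hK, IntermediateField.adjoin_simple_eq_bot_iff]
      exact IntermediateField.mem_bot.2 ⟨⟨α, hmem⟩, rfl⟩
    have h1 : Module.finrank E K = 1 := by rw [hbot, IntermediateField.finrank_bot]
    exact hp.out.one_lt.ne' (hd.symm.trans h1)
  · have := congrArg (fun z : K => (z : Fsep)) ha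
    have h2 : (a : Fsep) = (α : Fsep) ^ p := this
    exact h2 ▸ a.2

theorem restrictScalars_adjoin_simple_le {E L : IntermediateField F Fsep} (hE : E ≤ L) {x : Fsep}
    (hx : x ∈ L) : IntermediateField.restrictScalars F E⟮x⟯ ≤ L := by
  have h : E⟮x⟯ ≤ IntermediateField.extendScalars hE := by
    rw [IntermediateField.adjoin_simple_le_iff]
    exact hx
  exact fun y hy => h hy

/-- If every element of `E` is fixed by some `p`-power iterate of `σ`, so is every element of the
next layer. -/
theorem step_le_primePowFixedField [Fact p.Prime] {ζ : F} (hζ : IsPrimitiveRoot ζ p)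
    {σ : Fsep ≃ₐ[F] Fsep} {E : IntermediateField F Fsep} (hE : E ≤ primePowFixedField p σ) :
    step p F Fsep E ≤ primePowFixedField p σ := by
  refine iSup_le ?_
  rintro (_ | ⟨K, hgal, hd, -⟩)
  · exact hE
  · obtain ⟨x, -, hxp, rfl⟩ := exists_eq_adjoin_root hζ hd
    exact restrictScalars_adjoin_simple_le hE (mem_primePowFixedField_of_pow_mem hζ (hE hxp))

theorem filtration_le_primePowFixedField [Fact p.Prime] {ζ : F} (hζ : IsPrimitiveRoot ζ p)
    (σ : Fsep ≃ₐ[F] Fsep) : ∀ n : ℕ, filtration p F Fsep n ≤ primePowFixedField p σ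
  | 0 => bot_le
  | 1 => bot_le
  | n + 2 => step_le_primePowFixedField hζ (filtration_le_primePowFixedField hζ σ (n + 1))

theorem apply_mem_of_normal [Normal F Fsep] {E : IntermediateField F Fsep} [hE : Normal F E]
    (σ : Fsep ≃ₐ[F] Fsep) {x : Fsep} (hx : x ∈ E) : σ x ∈ E :=
  IntermediateField.normal_iff_forall_map_le'.1 hE σ ⟨x, hx, rfl⟩

/-- A `p`-th root generating a cyclic degree-`p` extension of `E` that is normal over `F` is moved
by `σ` only by an element of `E`, provided that `σ` acts on `E` through `p`-power orders. -/
theorem exists_apply_eq_mul [hp : Fact p.Prime] [Normal F Fsep] {ζ : F} (hζ : IsPrimitiveRoot ζ p)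
    {σ : Fsep ≃ₐ[F] Fsep} {E : IntermediateField F Fsep} [Normal F E]
    (hE : E ≤ primePowFixedField p σ) {x : Fsep} (hx : x ∉ E) (hxp : x ^ p ∈ E)
    [IsGalois E E⟮x⟯] (hd : Module.finrank E E⟮x⟯ = p)
    (hnorm : Normal F (IntermediateField.restrictScalars F E⟮x⟯)) :
    ∃ u ∈ E, σ x = x * u := by
  have hx0 : x ≠ 0 := fun h => hx (h ▸ zero_mem E)
  have hxK : x ∈ E⟮x⟯ := IntermediateField.mem_adjoin_simple_self E x
  have hσxK : σ x ∈ E⟮x⟯ :=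
    apply_mem_of_normal (E := IntermediateField.restrictScalars F E⟮x⟯) σ hxK
  obtain ⟨i, u, hu⟩ := exists_eq_pow_mul_of_pow_mem (x := (⟨x, hxK⟩ : E⟮x⟯))
    (y := ⟨σ x, hσxK⟩) hd
    (by
      rintro ⟨a, ha⟩
      have hax : (a : Fsep) = x := congrArg (fun z : E⟮x⟯ => (z : Fsep)) ha
      exact hx (hax ▸ a.2))
    ⟨⟨x ^ p, hxp⟩, rfl⟩
    ⟨⟨σ x ^ p, by rw [← map_pow]; exact apply_mem_of_normal σ hxp⟩, rfl⟩
  replace hu : σ x = x ^ i * u := congrArg (fun z : E⟮x⟯ => (z : Fsep)) hu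
  -- iterating `σ` multiplies the exponent of `x` by `i`, up to `E`
  have hit : ∀ m : ℕ, ∃ v ∈ E, σ^[m] x = x ^ (i ^ m) * v := by
    intro m
    induction m with
    | zero => exact ⟨1, one_mem E, by simp⟩
    | succ m ih =>
      obtain ⟨v, hv, hvm⟩ := ih
      refine ⟨u ^ i ^ m * σ v, mul_mem (pow_mem u.2 _) (apply_mem_of_normal σ hv), ?_⟩
      rw [Function.iterate_succ_apply', hvm, map_mul, map_pow, hu]
      ring
  obtain ⟨k, hk⟩ := mem_primePowFixedField.1 (mem_primePowFixedField_of_pow_mem hζ (hE hxp))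
  obtain ⟨v, hv, hvk⟩ := hit (p ^ k)
  rw [hk] at hvk
  have hv0 : v ≠ 0 := by
    rintro rfl
    exact hx0 (by simpa using hvk)
  -- the exponents `m` with `x ^ m ∈ E` are the multiples of `p`
  have hdvd : ∀ m : ℤ, x ^ m ∈ E → (p : ℤ) ∣ m := by
    intro m hm
    by_contra hnd
    obtain ⟨a, b, hab⟩ := (Prime.coprime_iff_not_dvd (Nat.prime_iff_prime_int.1 hp.out)).2 hnd
    refine hx ?_
    have : x = (x ^ p) ^ a * (x ^ m) ^ b := by
      rw [← zpow_natCast, ← zpow_mul, ← zpow_mul, ← zpow_add₀ hx0, mul_comm _ a, mul_comm m, hab,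
        zpow_one]
    rw [this]
    exact mul_mem (zpow_mem hxp _) (zpow_mem hm _)
  have h1 : (p : ℤ) ∣ (i : ℤ) ^ p ^ k - 1 := by
    refine hdvd _ ?_
    have : x ^ ((i : ℤ) ^ p ^ k - 1) = v⁻¹ := by
      rw [zpow_sub_one₀ hx0, ← Nat.cast_pow, zpow_natCast, mul_inv_eq_iff_eq_mul₀ hx0,
        eq_inv_mul_iff_mul_eq₀ hv0, mul_comm, ← hvk]
    rw [this]
    exact inv_mem hv
  have h2 : (p : ℤ) ∣ i - 1 := by
    rw [← ZMod.intCast_zmod_eq_zero_iff_dvd] at h1 ⊢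
    push_cast at h1 ⊢
    rwa [ZMod.pow_card_pow] at h1
  obtain ⟨c, hc⟩ := h2
  refine ⟨(x ^ p) ^ c * u, mul_mem (zpow_mem hxp _) u.2, ?_⟩
  rw [hu, ← mul_assoc, ← zpow_natCast x i, ← zpow_natCast x p, ← zpow_mul, ← hc,
    ← zpow_one_add₀ hx0, add_sub_cancel]

/-- Adjoining a `p`-th root of an invariant `p`-class lands in the next layer. -/
theorem mem_step_of_pow_eq [hp : Fact p.Prime] [IsGalois F Fsep] {ζ : F}
    (hζ : IsPrimitiveRoot ζ p) {E : IntermediateField F Fsep} [Normal F E] {x : Fsep} {θ : E}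
    (hθ : ∀ σ : E ≃ₐ[F] E, ∃ u : E, σ θ = θ * u ^ p) (hxθ : x ^ p = θ) :
    x ∈ step p F Fsep E := by
  by_cases hx : x ∈ E
  · exact le_step p F Fsep E hx
  have hζ' := hζ.map_of_injective (algebraMap F Fsep).injective
  have hζE : ∀ j : ℕ, algebraMap F Fsep ζ ^ j ∈ E := fun j => pow_mem (E.algebraMap_mem ζ) j
  have hirr : Irreducible (Polynomial.X ^ p - Polynomial.C θ) := by
    refine X_pow_sub_C_irreducible_of_prime hp.out fun b hb => hx ?_
    obtain ⟨j, hj⟩ := exists_pow_eq_mul_of_pow_eq hζ' (x := (b : Fsep)) (y := x)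
      (by rw [hxθ, ← hb]; rfl)
    exact hj ▸ mul_mem (hζE j) b.2
  have hroot : Polynomial.aeval x (Polynomial.X ^ p - Polynomial.C θ) = 0 := by
    simp [hxθ]
  have hmin : minpoly E x = Polynomial.X ^ p - Polynomial.C θ :=
    (minpoly.eq_of_irreducible_of_monic hirr hroot
      (Polynomial.monic_X_pow_sub_C _ hp.out.ne_zero)).symm
  have hint : IsIntegral E x := ⟨_, Polynomial.monic_X_pow_sub_C _ hp.out.ne_zero, hroot⟩
  have hd : Module.finrank E E⟮x⟯ = p := by
    rw [IntermediateField.adjoin.finrank hint, hmin, Polynomial.natDegree_X_pow_sub_C]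
  have hnorm : Normal F (IntermediateField.restrictScalars F E⟮x⟯) := by
    refine IntermediateField.normal_iff_forall_map_le'.2 fun σ => ?_
    rw [IntermediateField.map_le_iff_le_comap]
    refine restrictScalars_adjoin_simple_le (fun y hy => ?_) ?_
    · exact E⟮x⟯.algebraMap_mem ⟨σ y, apply_mem_of_normal σ hy⟩
    · obtain ⟨u, hu⟩ := hθ (σ.restrictNormal E)
      have hσθ : σ θ = θ * u ^ p := by
        have := σ.restrictNormal_commutes E θ
        rw [hu] at this
        exact this.symm
      obtain ⟨j, hj⟩ := exists_pow_eq_mul_of_pow_eq hζ' (x := x * u) (y := σ x)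
        (by rw [← map_pow, hxθ, hσθ, mul_pow, hxθ])
      change σ x ∈ E⟮x⟯
      rw [hj]
      exact mul_mem (E⟮x⟯.algebraMap_mem ⟨_, hζE j⟩)
        (mul_mem (IntermediateField.mem_adjoin_simple_self E x) (E⟮x⟯.algebraMap_mem u))
  have hgalF : IsGalois F (IntermediateField.restrictScalars F E⟮x⟯) := { to_normal := hnorm }
  have hgal : IsGalois E E⟮x⟯ := by
    have : IsGalois F E⟮x⟯ := hgalF
    exact IsGalois.tower_top_of_isGalois F E E⟮x⟯
  exact (le_iSup (fun K : Option {K : IntermediateField E Fsep //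
      IsGalois E K ∧ Module.finrank E K = p ∧ IsGalois F (IntermediateField.restrictScalars F K)} =>
    K.elim E fun K => IntermediateField.restrictScalars F (K : IntermediateField E Fsep))
    (some ⟨E⟮x⟯, hgal, hd, hgalF⟩)) (IntermediateField.mem_adjoin_simple_self E x)

/-- The next layer over a normal extension with `p`-power Galois action is obtained by adjoining
all `p`-th roots of invariant `p`-classes. -/
theorem step_eq_adjoin_roots [hp : Fact p.Prime] [IsGalois F Fsep] {ζ : F}
    (hζ : IsPrimitiveRoot ζ p) (E : IntermediateField F Fsep) [Normal F E]
    (hE : ∀ σ : Fsep ≃ₐ[F] Fsep, E ≤ primePowFixedField p σ) :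
    step p F Fsep E = IntermediateField.adjoin F ((E : Set Fsep) ∪
      {x : Fsep | ∃ θ : E, θ ≠ 0 ∧ (∀ σ : E ≃ₐ[F] E, ∃ u : E, σ θ = θ * u ^ p) ∧
        x ^ p = (θ : Fsep)}) := by
  apply le_antisymm
  · have hle : E ≤ IntermediateField.adjoin F ((E : Set Fsep) ∪
      {x : Fsep | ∃ θ : E, θ ≠ 0 ∧ (∀ σ : E ≃ₐ[F] E, ∃ u : E, σ θ = θ * u ^ p) ∧
        x ^ p = (θ : Fsep)}) :=
      fun y hy => IntermediateField.subset_adjoin F _ (Or.inl hy)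
    refine iSup_le ?_
    rintro (_ | ⟨K, hgal, hd, hgalF⟩)
    · exact hle
    · obtain ⟨x, hx, hxp, rfl⟩ := exists_eq_adjoin_root hζ hd
      refine restrictScalars_adjoin_simple_le hle (IntermediateField.subset_adjoin F _ (Or.inr ?_))
      refine ⟨⟨x ^ p, hxp⟩, ?_, fun σ => ?_, rfl⟩
      · intro h
        have h0 : x ^ p = 0 := congrArg Subtype.val h
        exact hx (pow_eq_zero_iff hp.out.ne_zero |>.1 h0 ▸ zero_mem E)
      · obtain ⟨u, hu, hux⟩ := exists_apply_eq_mul hζ (hE (σ.liftNormal Fsep)) hx hxp hd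
          hgalF.to_normal
        refine ⟨⟨u, hu⟩, Subtype.ext ?_⟩
        have h := σ.liftNormal_commutes Fsep ⟨x ^ p, hxp⟩
        change σ.liftNormal Fsep (x ^ p) = _ at h
        rw [map_pow, hux, mul_pow] at h
        exact h.symm
  · rw [IntermediateField.adjoin_le_iff]
    rintro x (hx | ⟨θ, -, hθ, hxθ⟩)
    · exact le_step p F Fsep E hx
    · exact mem_step_of_pow_eq hζ hθ hxθ

end

end BKPaper

theorem stmt13 (p : ℕ) [Fact p.Prime] (F Fsep : Type) [Field F] [Field Fsep]
    [Algebra F Fsep] [IsSepClosure F Fsep] (hζ : ∃ ζ : F, IsPrimitiveRoot ζ p)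
    (n : ℕ) (hn : 3 ≤ n) :
    filtration p F Fsep (n + 1) =
      IntermediateField.adjoin F ((filtration p F Fsep n : Set Fsep) ∪
        {x : Fsep | ∃ θ : ↥(filtration p F Fsep n), θ ≠ 0 ∧
          (∀ σ : ↥(filtration p F Fsep n) ≃ₐ[F] ↥(filtration p F Fsep n),
            ∃ u : ↥(filtration p F Fsep n), σ θ = θ * u ^ p) ∧
          x ^ p = (θ : Fsep)}) := by
  obtain ⟨ζ, hζ⟩ := hζ
  obtain ⟨m, rfl⟩ : ∃ m, n = m + 1 := ⟨n - 1, by omega⟩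
  exact step_eq_adjoin_roots hζ _ fun σ => filtration_le_primePowFixedField hζ σ _
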